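/- Let (X, W) be a left Frobenius pair in A. Then (X, Ŵ) is a cotorsion pair on the extension-closed subcategory Thick(X) = X̂ of A; in particular, Ŵ is closed under direct summands. -/

import Mathlib

/-!
Auslander–Buchweitz approximation. Let `0 → K → E → M → 0` be the first step of an `X`-resolution
and suppose `K` embeds into some `V ∈ Ŵ` with cokernel in `X`. The pushout `P` of `E` and `V` under
`K` is an extension of an object of `X` by `E`, so it lies in `X` and `0 → V → P → M → 0` is exact.
Embedding `P` into an object of `W` and dividing out `V` embeds `M` into an object of `Ŵ` with
cokernel in `X`, which keeps the induction going.

Dimension shifting gives `Extⁱ(X, Ŵ) = 0` for `i ≥ 1`. Given an extension of `D ∈ X` by `A ∈ X̂ₙ`,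
push it out along an embedding of `A` into an object of `Ŵₙ`: it splits there, whence the original
middle term lies in `X̂ₙ`. In the proof that `X̂` is thick, this stability replaces the
projectivity of the terms of a resolution.

Finally `Ŵ = X̂ ∩ X^⊥`, and the right-hand side is visibly closed under direct summands.
-/

open CategoryTheory CategoryTheory.Limits CategoryTheory.Abelian ZeroObject

universe w v u

namespace FrobeniusPaper

variable {C : Type u} [Category.{v} C] [Abelian C]

/-- `f, g` form a short exact sequence `0 → A → B → D → 0` in the abelian category `C`. -/
def IsSES {A B D : C} (f : A ⟶ B) (g : B ⟶ D) : Prop :=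
  ∃ w : f ≫ g = 0, (ShortComplex.mk f g w).ShortExact

/-- A "subcategory" in the sense of the paper: a full additive subcategory, regarded as the
predicate of membership for its objects, closed under isomorphisms and direct summands. -/
structure IsSubcat (X : C → Prop) : Prop where
  zero : X 0
  iso_closed : ∀ {A B : C}, (A ≅ B) → X A → X B
  biprod_closed : ∀ {A B : C}, X A → X B → X (A ⊞ B)
  summand_closed : ∀ {A M : C} (i : A ⟶ M) (p : M ⟶ A), i ≫ p = 𝟙 A → X M → X A

/-- `Hat X n M` means `M ∈ X̂ₙ`, i.e. there is an exact sequence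
`0 → Xₙ → ⋯ → X₁ → X₀ → M → 0` with all `Xᵢ ∈ X`. -/
def Hat (X : C → Prop) : ℕ → C → Prop
  | 0, M => X M
  | (n + 1), M => ∃ (K E : C) (f : K ⟶ E) (g : E ⟶ M), IsSES f g ∧ X E ∧ Hat X n K

/-- `M ∈ X̂ = ⋃ₙ X̂ₙ`. -/
def HatAll (X : C → Prop) (M : C) : Prop := ∃ n, Hat X n M

/-- `W` is a cogenerator for `X`. -/
def IsCogenerator (W X : C → Prop) : Prop :=
  (∀ M, W M → X M) ∧
    ∀ M, X M → ∃ (W₀ X' : C) (f : M ⟶ W₀) (g : W₀ ⟶ X'), IsSES f g ∧ W W₀ ∧ X X'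

/-- `W` is a generator for `X`. -/
def IsGenerator (W X : C → Prop) : Prop :=
  (∀ M, W M → X M) ∧
    ∀ M, X M → ∃ (X' W₀ : C) (f : X' ⟶ W₀) (g : W₀ ⟶ M), IsSES f g ∧ W W₀ ∧ X X'

/-- `X` is closed under extensions. -/
def ExtClosed (X : C → Prop) : Prop :=
  ∀ ⦃A B D : C⦄ (f : A ⟶ B) (g : B ⟶ D), IsSES f g → X A → X D → X B

/-- `X` is closed under kernels of epimorphisms. -/
def KerEpiClosed (X : C → Prop) : Prop :=
  ∀ ⦃A B D : C⦄ (f : A ⟶ B) (g : B ⟶ D), IsSES f g → X B → X D → X A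

/-- A thick subcategory: closed under direct summands and two-out-of-three for
short exact sequences. -/
def IsThickSub (T : C → Prop) : Prop :=
  IsSubcat T ∧ ∀ ⦃A B D : C⦄ (f : A ⟶ B) (g : B ⟶ D), IsSES f g →
    (T A → T B → T D) ∧ (T A → T D → T B) ∧ (T B → T D → T A)

/-- Membership in `Thick(X)`, the smallest thick subcategory containing `X`. -/
def thickClosure (X : C → Prop) (M : C) : Prop :=
  ∀ T : C → Prop, IsThickSub T → (∀ N, X N → T N) → T M

variable [HasExt.{w} C]

/-- `Y ∈ X^⊥`, i.e. `Extⁱ(M, Y) = 0` for all `i ≥ 1` and `M ∈ X`. -/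
def rightPerp (X : C → Prop) (Y : C) : Prop :=
  ∀ M, X M → ∀ i : ℕ, 1 ≤ i → Subsingleton (Abelian.Ext M Y i)

/-- A left Frobenius pair `(X, W)`. -/
structure LeftFrobenius (X W : C → Prop) : Prop where
  subX : IsSubcat X
  subW : IsSubcat W
  extClosed : ExtClosed X
  kerEpiClosed : KerEpiClosed X
  cogen : IsCogenerator W X
  perp : ∀ M, W M → rightPerp X M

/-- A strong left Frobenius pair `(X, W)`. -/
structure StrongLeftFrobenius (X W : C → Prop) extends LeftFrobenius X W : Prop where
  gen : IsGenerator W X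
  proj : ∀ M N, W M → X N → ∀ i : ℕ, 1 ≤ i → Subsingleton (Abelian.Ext M N i)

/-- A cotorsion pair `(U, V)` on an extension-closed subcategory `B` of `C`. -/
structure CotorsionPairOn (B U V : C → Prop) : Prop where
  subU : ∀ M, U M → B M
  subV : ∀ M, V M → B M
  isoU : ∀ {A B' : C}, (A ≅ B') → U A → U B'
  summandU : ∀ {A M : C} (i : A ⟶ M) (p : M ⟶ A), i ≫ p = 𝟙 A → U M → U A
  isoV : ∀ {A B' : C}, (A ≅ B') → V A → V B'
  summandV : ∀ {A M : C} (i : A ⟶ M) (p : M ⟶ A), i ≫ p = 𝟙 A → V M → V A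
  ext1 : ∀ M N, U M → V N → Subsingleton (Abelian.Ext M N 1)
  res : ∀ M, B M → ∃ (V₀ U₀ : C) (f : V₀ ⟶ U₀) (g : U₀ ⟶ M), IsSES f g ∧ U U₀ ∧ V V₀
  cores : ∀ M, B M → ∃ (V₀ U₀ : C) (f : M ⟶ V₀) (g : V₀ ⟶ U₀), IsSES f g ∧ U U₀ ∧ V V₀

section ShortExact

variable {𝒜 : Type u} [Category.{v} 𝒜] [Abelian 𝒜]

namespace IsSES

variable {A B D : 𝒜} {f : A ⟶ B} {g : B ⟶ D}

lemma zero (h : IsSES f g) : f ≫ g = 0 := h.choose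

lemma mono (h : IsSES f g) : Mono f := h.choose_spec.mono_f

lemma epi (h : IsSES f g) : Epi g := h.choose_spec.epi_g

lemma exists_lift (h : IsSES f g) {T : 𝒜} (x : T ⟶ B) (hx : x ≫ g = 0) :
    ∃ y : T ⟶ A, y ≫ f = x :=
  have := h.mono
  ⟨h.choose_spec.exact.lift x hx, h.choose_spec.exact.lift_f x hx⟩

lemma of_exists_lift [Mono f] [Epi g] (w : f ≫ g = 0)
    (hlift : ∀ ⦃T : 𝒜⦄ (x : T ⟶ B), x ≫ g = 0 → ∃ y : T ⟶ A, y ≫ f = x) : IsSES f g :=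
  ⟨w, .mk' (ShortComplex.exact_of_f_is_kernel _ (KernelFork.IsLimit.ofι' f w fun x hx =>
    ⟨(hlift x hx).choose, (hlift x hx).choose_spec⟩)) ‹_› ‹_›⟩

lemma op (h : IsSES f g) : IsSES g.op f.op :=
  ⟨by rw [← op_comp, h.zero, op_zero], h.choose_spec.op⟩

lemma unop {A B D : 𝒜ᵒᵖ} {f : A ⟶ B} {g : B ⟶ D} (h : IsSES f g) : IsSES g.unop f.unop :=
  ⟨by rw [← unop_comp, h.zero, unop_zero], h.choose_spec.unop⟩

lemma kernel_ι (g : B ⟶ D) [Epi g] : IsSES (kernel.ι g) g :=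
  of_exists_lift (kernel.condition g) fun _ x hx => ⟨kernel.lift g x hx, kernel.lift_ι g x hx⟩

lemma zero_id (A : 𝒜) : IsSES (0 : 0 ⟶ A) (𝟙 A) :=
  have : Mono (0 : 0 ⟶ A) := (isZero_zero 𝒜).mono _
  of_exists_lift zero_comp fun _ x hx => ⟨0, by simpa using hx.symm⟩

lemma biprod_inl_snd (A D : 𝒜) : IsSES (biprod.inl : A ⟶ A ⊞ D) biprod.snd :=
  ⟨biprod.inl_snd, (ShortComplex.Splitting.ofHasBinaryBiproduct A D).shortExact⟩

lemma comp_iso (h : IsSES f g) {D' : 𝒜} (e : D ≅ D') : IsSES f (g ≫ e.hom) :=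
  have := h.mono
  have := h.epi
  of_exists_lift (by rw [reassoc_of% h.zero, zero_comp]) fun _ x hx =>
    h.exists_lift x (by rwa [← cancel_mono e.hom, Category.assoc, zero_comp])

lemma biprod_map (h : IsSES f g) {A' B' D' : 𝒜} {f' : A' ⟶ B'} {g' : B' ⟶ D'}
    (h' : IsSES f' g') : IsSES (biprod.map f f') (biprod.map g g') := by
  have := h.mono
  have := h'.mono
  have := h.epi
  have := h'.epi
  refine of_exists_lift (by ext <;> simp [h.zero, h'.zero]) fun T x hx => ?_
  obtain ⟨y, hy⟩ := h.exists_lift (x ≫ biprod.fst) (by simpa using hx =≫ biprod.fst)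
  obtain ⟨y', hy'⟩ := h'.exists_lift (x ≫ biprod.snd) (by simpa using hx =≫ biprod.snd)
  exact ⟨biprod.lift y y', by ext <;> simp [hy, hy']⟩

lemma nonempty_iso_biprod_of_section (h : IsSES f g) (s : D ⟶ B) (hs : s ≫ g = 𝟙 D) :
    Nonempty (B ≅ A ⊞ D) :=
  ⟨(ShortComplex.Splitting.ofExactOfSection _ h.choose_spec.exact s hs h.mono).isoBinaryBiproduct⟩

lemma exists_of_isPullback (h : IsSES f g) {P E : 𝒜} {t : P ⟶ B} {l : P ⟶ E} {e : E ⟶ D}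
    (sq : IsPullback t l g e) : ∃ a : A ⟶ P, IsSES a l := by
  have := h.mono
  have := h.epi
  have : Epi l := Abelian.epi_snd_of_isLimit g e sq.isLimit
  let a : A ⟶ P := sq.lift f 0 (by rw [h.zero, zero_comp])
  have ha_fst : a ≫ t = f := sq.lift_fst _ _ _
  have ha_snd : a ≫ l = 0 := sq.lift_snd _ _ _
  have : Mono a := mono_of_mono_fac ha_fst
  refine ⟨a, of_exists_lift ha_snd fun T x hx => ?_⟩
  obtain ⟨y, hy⟩ := h.exists_lift (x ≫ t) (by rw [Category.assoc, sq.w, reassoc_of% hx, zero_comp])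
  exact ⟨y, sq.hom_ext (by rw [Category.assoc, ha_fst, hy])
    (by rw [Category.assoc, ha_snd, comp_zero, hx])⟩

lemma exists_pullback (h : IsSES f g) {K E : 𝒜} {k : K ⟶ E} {e : E ⟶ D} (h' : IsSES k e) :
    ∃ (P : 𝒜) (a : A ⟶ P) (b : P ⟶ E) (c : K ⟶ P) (d : P ⟶ B), IsSES a b ∧ IsSES c d :=
  have sq := IsPullback.of_hasPullback g e
  have ⟨a, ha⟩ := h.exists_of_isPullback sq
  have ⟨c, hc⟩ := h'.exists_of_isPullback sq.flip
  ⟨_, a, _, c, _, ha, hc⟩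

lemma exists_pushout (h : IsSES f g) {V U : 𝒜} {j : A ⟶ V} {q : V ⟶ U} (h' : IsSES j q) :
    ∃ (P : 𝒜) (a : V ⟶ P) (b : P ⟶ D) (c : B ⟶ P) (d : P ⟶ U), IsSES a b ∧ IsSES c d :=
  have ⟨_, _, _, _, _, hab, hcd⟩ := h.op.exists_pullback h'.op
  ⟨_, _, _, _, _, hab.unop, hcd.unop⟩

lemma exists_kernel_comp (h : IsSES f g) {K E : 𝒜} {k : K ⟶ E} {e : E ⟶ B} (h' : IsSES k e) :
    ∃ (P : 𝒜) (a : K ⟶ P) (b : P ⟶ A) (c : P ⟶ E), IsSES a b ∧ IsSES c (e ≫ g) := by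
  have := h.mono
  have := h.epi
  have := h'.epi
  have sq := IsPullback.of_hasPullback e f
  obtain ⟨a, ha⟩ := h'.exists_of_isPullback sq
  have hzero : pullback.fst e f ≫ e ≫ g = 0 := by rw [sq.w_assoc, h.zero, comp_zero]
  refine ⟨_, a, _, _, ha, of_exists_lift hzero fun T x hx => ?_⟩
  obtain ⟨y, hy⟩ := h.exists_lift (x ≫ e) (by rw [Category.assoc, hx])
  exact ⟨sq.lift x y hy.symm, sq.lift_fst _ _ _⟩

lemma exists_cokernel_comp (h : IsSES f g) {E U : 𝒜} {j : B ⟶ E} {q : E ⟶ U} (h' : IsSES j q) :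
    ∃ (Q : 𝒜) (a : E ⟶ Q) (b : D ⟶ Q) (c : Q ⟶ U), IsSES (f ≫ j) a ∧ IsSES b c :=
  have ⟨_, _, _, _, hab, hc⟩ := h.op.exists_kernel_comp h'.op
  ⟨_, _, _, _, hc.unop, hab.unop⟩

end IsSES

end ShortExact

section Resolution

variable {𝒜 : Type u} [Category.{v} 𝒜] [Abelian 𝒜] {X T : 𝒜 → Prop}

/-- `T` is closed under cokernels of monomorphisms, the dual of `KerEpiClosed`. A class `T` with
this property contains `X̂` as soon as it contains `X`. -/
def CokerMonoClosed (T : 𝒜 → Prop) : Prop :=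
  ∀ ⦃A B D : 𝒜⦄ (f : A ⟶ B) (g : B ⟶ D), IsSES f g → T A → T B → T D

/-- Every `X̂ₙ` is stable under extensions by `X`, with the object of `X̂ₙ` on the left and that of
`X` on the right. Along with `KerEpiClosed X`, this is what makes `X̂` thick. -/
def HatExtStable (X : 𝒜 → Prop) : Prop :=
  ∀ ⦃n : ℕ⦄ ⦃A B D : 𝒜⦄ (f : A ⟶ B) (g : B ⟶ D), IsSES f g → Hat X n A → X D → Hat X n B

lemma IsSubcat.of_biprod_left (hX : IsSubcat X) {A B : 𝒜} (h : X (A ⊞ B)) : X A :=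
  hX.summand_closed biprod.inl biprod.fst biprod.inl_fst h

lemma IsSubcat.of_biprod_right (hX : IsSubcat X) {A B : 𝒜} (h : X (A ⊞ B)) : X B :=
  hX.summand_closed biprod.inr biprod.snd biprod.inr_snd h

namespace Hat

lemma of_iso (hX : IsSubcat X) {n : ℕ} {A B : 𝒜} (e : A ≅ B) (h : Hat X n A) : Hat X n B := by
  cases n with
  | zero => exact hX.iso_closed e h
  | succ n =>
    obtain ⟨K, E, f, g, hfg, hE, hK⟩ := h
    exact ⟨K, E, f, g ≫ e.hom, hfg.comp_iso e, hE, hK⟩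

lemma mono (hXT : ∀ M, X M → T M) {n : ℕ} {M : 𝒜} (h : Hat X n M) : Hat T n M := by
  induction n generalizing M with
  | zero => exact hXT M h
  | succ n ih =>
    obtain ⟨K, E, f, g, hfg, hE, hK⟩ := h
    exact ⟨K, E, f, g, hfg, hXT E hE, ih hK⟩

lemma of_mem (hzero : X 0) (n : ℕ) {M : 𝒜} (hM : X M) : Hat X n M := by
  induction n generalizing M with
  | zero => exact hM
  | succ n ih => exact ⟨0, M, 0, 𝟙 M, .zero_id M, hM, ih hzero⟩

lemma biprod (hX : IsSubcat X) {n : ℕ} {A B : 𝒜} (hA : Hat X n A) (hB : Hat X n B) :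
    Hat X n (A ⊞ B) := by
  induction n generalizing A B with
  | zero => exact hX.biprod_closed hA hB
  | succ n ih =>
    obtain ⟨K, E, f, g, hfg, hE, hK⟩ := hA
    obtain ⟨K', E', f', g', hfg', hE', hK'⟩ := hB
    exact ⟨_, _, _, _, hfg.biprod_map hfg', hX.biprod_closed hE hE', ih hK hK'⟩

end Hat

namespace HatAll

lemma of_ses {K E M : 𝒜} {k : K ⟶ E} {e : E ⟶ M} (h : IsSES k e) (hK : HatAll X K) (hE : X E) :
    HatAll X M :=
  have ⟨n, hK⟩ := hK
  ⟨n + 1, K, E, k, e, h, hE, hK⟩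

lemma exists_ses (hzero : X 0) {M : 𝒜} (hM : HatAll X M) :
    ∃ (K E : 𝒜) (k : K ⟶ E) (e : E ⟶ M), IsSES k e ∧ HatAll X K ∧ X E := by
  obtain ⟨_ | n, hM⟩ := hM
  · exact ⟨0, M, 0, 𝟙 M, .zero_id M, ⟨0, hzero⟩, hM⟩
  · obtain ⟨K, E, k, e, hke, hE, hK⟩ := hM
    exact ⟨K, E, k, e, hke, ⟨n, hK⟩, hE⟩

lemma mem_of_cokerMonoClosed (hT : CokerMonoClosed T) (hXT : ∀ M, X M → T M) {M : 𝒜}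
    (hM : HatAll X M) : T M := by
  obtain ⟨n, hM⟩ := hM
  induction n generalizing M with
  | zero => exact hXT M hM
  | succ n ih =>
    obtain ⟨K, E, k, e, hke, hE, hK⟩ := hM
    exact hT k e hke (ih hK) (hXT E hE)

lemma exists_syzygy_of_quotient (hzero : X 0) {A B D : 𝒜} {f : A ⟶ B} {g : B ⟶ D}
    (h : IsSES f g) (hB : HatAll X B) :
    ∃ (K L E : 𝒜) (a : K ⟶ L) (b : L ⟶ A) (c : L ⟶ E) (d : E ⟶ D),
      IsSES a b ∧ IsSES c d ∧ HatAll X K ∧ X E := by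
  obtain ⟨K, E, k, e, hke, hK, hE⟩ := hB.exists_ses hzero
  obtain ⟨L, a, b, c, hab, hc⟩ := h.exists_kernel_comp hke
  exact ⟨K, L, E, a, b, c, e ≫ g, hab, hc, hK, hE⟩

end HatAll

lemma KerEpiClosed.hat_kernel (hX : KerEpiClosed X) {n : ℕ} {A B D : 𝒜} {f : A ⟶ B} {g : B ⟶ D}
    (h : IsSES f g) (hB : Hat X n B) (hD : X D) : Hat X n A := by
  cases n with
  | zero => exact hX f g h hB hD
  | succ n =>
    obtain ⟨K, E, k, e, hke, hE, hK⟩ := hB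
    obtain ⟨P, a, b, c, hab, hc⟩ := h.exists_kernel_comp hke
    exact ⟨K, P, a, b, hab, hX c (e ≫ g) hc hE hD, hK⟩

lemma ExtClosed.exists_ses_of_pushout (hX : ExtClosed X) {K E M V U : 𝒜} {k : K ⟶ E} {e : E ⟶ M}
    {j : K ⟶ V} {q : V ⟶ U} (hke : IsSES k e) (hjq : IsSES j q) (hE : X E) (hU : X U) :
    ∃ (P : 𝒜) (a : V ⟶ P) (b : P ⟶ M), IsSES a b ∧ X P := by
  obtain ⟨P, a, b, c, d, hab, hcd⟩ := hke.exists_pushout hjq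
  exact ⟨P, a, b, hab, hX c d hcd hE hU⟩

lemma thickClosure_iff_hatAll (hX : IsThickSub (HatAll X)) (M : 𝒜) :
    thickClosure X M ↔ HatAll X M :=
  ⟨fun hM => hM _ hX fun _ hN => ⟨0, hN⟩, fun hM _ hT hXT =>
    hM.mem_of_cokerMonoClosed (fun _ _ _ f g h => (hT.2 f g h).1) hXT⟩

lemma HatExtStable.extClosed_hatAll (hX : HatExtStable X) (hzero : X 0) :
    ExtClosed (HatAll X) := by
  rintro A B D f g hfg hA ⟨m, hD⟩
  induction m generalizing A B D with
  | zero =>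
    obtain ⟨n, hA⟩ := hA
    exact ⟨n, hX f g hfg hA hD⟩
  | succ m ih =>
    obtain ⟨n, hA⟩ := hA
    obtain ⟨K, E, k, e, hke, hE, hK⟩ := hD
    obtain ⟨P, a, b, c, d, hab, hcd⟩ := hfg.exists_pullback hke
    have hP : HatAll X P := ⟨n, hX a b hab hA hE⟩
    obtain ⟨K', L, E', a', b', c', d', hab', hcd', hK', hE'⟩ :=
      HatAll.exists_syzygy_of_quotient hzero hcd hP
    exact .of_ses hcd' (ih a' b' hab' hK' hK) hE'

lemma ExtClosed.cokerMonoClosed_hatAll (hX : ExtClosed (HatAll X)) (hzero : X 0) :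
    CokerMonoClosed (HatAll X) := by
  intro A B D f g hfg hA hB
  obtain ⟨K, L, E, a, b, c, d, hab, hcd, hK, hE⟩ := HatAll.exists_syzygy_of_quotient hzero hfg hB
  exact .of_ses hcd (hX a b hab hK hA) hE

lemma KerEpiClosed.kerEpiClosed_hatAll (hX : KerEpiClosed X) (hXhat : ExtClosed (HatAll X))
    (hzero : X 0) : KerEpiClosed (HatAll X) := by
  intro A B D f g hfg hB hD
  obtain ⟨K, E, k, e, hke, hK, hE⟩ := hD.exists_ses hzero
  obtain ⟨P, a, b, c, d, hab, hcd⟩ := hfg.exists_pullback hke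
  obtain ⟨n, hP⟩ := hXhat c d hcd hK hB
  exact ⟨n, hX.hat_kernel hab hP hE⟩

/-- Schanuel's comparison of the syzygy of `A ⊞ B` given by a single cover `E` with the one given
by the cover `E ⊞ E`, which is the sum of a syzygy of `A` and a syzygy of `B`. -/
lemma HatExtStable.hat_of_biprod_right (hX : HatExtStable X) (hsub : IsSubcat X)
    (hker : KerEpiClosed X) {n : ℕ} {A B : 𝒜} (h : Hat X n (A ⊞ B)) : Hat X n B := by
  induction n generalizing A B with
  | zero => exact hsub.of_biprod_right h
  | succ n ih =>
    obtain ⟨K, E, k, e, hke, hE, hK⟩ := h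
    have := hke.epi
    have hA := IsSES.kernel_ι (e ≫ (biprod.fst : A ⊞ B ⟶ A))
    have hB := IsSES.kernel_ι (e ≫ (biprod.snd : A ⊞ B ⟶ B))
    obtain ⟨P, a, b, c, d, hab, hcd⟩ := hke.exists_pullback (hA.biprod_map hB)
    have hP : Hat X n P := hX a b hab hK (hsub.biprod_closed hE hE)
    exact ⟨_, E, _, _, hB, hE, ih (hker.hat_kernel hcd hP hE)⟩

lemma HatExtStable.hatAll_of_retract (hX : HatExtStable X) (hsub : IsSubcat X)
    (hker : KerEpiClosed X) {A M : 𝒜} (i : A ⟶ M) (p : M ⟶ A) (hip : i ≫ p = 𝟙 A)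
    (hM : HatAll X M) : HatAll X A := by
  obtain ⟨n, hM⟩ := hM
  have : IsSplitEpi p := ⟨⟨i, hip⟩⟩
  obtain ⟨e⟩ := (IsSES.kernel_ι p).nonempty_iso_biprod_of_section i hip
  exact ⟨n, hX.hat_of_biprod_right hsub hker (hM.of_iso hsub e)⟩

lemma HatExtStable.isThickSub_hatAll (hX : HatExtStable X) (hsub : IsSubcat X)
    (hker : KerEpiClosed X) : IsThickSub (HatAll X) := by
  have hext : ExtClosed (HatAll X) := hX.extClosed_hatAll hsub.zero
  have hsubcat : IsSubcat (HatAll X) :=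
    { zero := ⟨0, hsub.zero⟩
      iso_closed := fun e ⟨n, hA⟩ => ⟨n, hA.of_iso hsub e⟩
      biprod_closed := fun {A B} hA hB => hext _ _ (.biprod_inl_snd A B) hA hB
      summand_closed := fun i p hip hM => hX.hatAll_of_retract hsub hker i p hip hM }
  exact ⟨hsubcat, fun A B D f g h => ⟨hext.cokerMonoClosed_hatAll hsub.zero f g h, hext f g h,
    hker.kerEpiClosed_hatAll hext hsub.zero f g h⟩⟩

namespace IsCogenerator

variable {W : 𝒜 → Prop}

lemma exists_embedding_of_hat (hW : IsCogenerator W X) (hX : ExtClosed X) {n : ℕ} {M : 𝒜}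
    (hM : Hat X n M) :
    ∃ (V U : 𝒜) (f : M ⟶ V) (g : V ⟶ U), IsSES f g ∧ X U ∧ Hat W n V := by
  induction n generalizing M with
  | zero =>
    obtain ⟨W₀, U, f, g, hfg, hW₀, hU⟩ := hW.2 M hM
    exact ⟨W₀, U, f, g, hfg, hU, hW₀⟩
  | succ n ih =>
    obtain ⟨K, E, k, e, hke, hE, hK⟩ := hM
    obtain ⟨V, U, j, q, hjq, hU, hV⟩ := ih hK
    obtain ⟨P, a, b, hab, hP⟩ := hX.exists_ses_of_pushout hke hjq hE hU
    obtain ⟨W₀, U', j', q', hjq', hW₀, hU'⟩ := hW.2 P hP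
    obtain ⟨Q, r, f, g, hr, hfg⟩ := hab.exists_cokernel_comp hjq'
    exact ⟨Q, U', f, g, hfg, hU', V, W₀, a ≫ j', r, hr, hW₀, hV⟩

lemma exists_cover_of_hatAll (hW : IsCogenerator W X) (hX : ExtClosed X) (hzero : X 0) {M : 𝒜}
    (hM : HatAll X M) :
    ∃ (V U : 𝒜) (f : V ⟶ U) (g : U ⟶ M), IsSES f g ∧ X U ∧ HatAll W V := by
  obtain ⟨K, E, k, e, hke, ⟨n, hK⟩, hE⟩ := hM.exists_ses hzero
  obtain ⟨V, U, j, q, hjq, hU, hV⟩ := hW.exists_embedding_of_hat hX hK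
  obtain ⟨P, a, b, hab, hP⟩ := hX.exists_ses_of_pushout hke hjq hE hU
  exact ⟨V, P, a, b, hab, hP, n, hV⟩

end IsCogenerator

end Resolution

section Orthogonal

lemma IsSES.nonempty_iso_biprod_of_subsingleton_ext {A B D : C} {f : A ⟶ B} {g : B ⟶ D}
    (h : IsSES f g) (hext : Subsingleton (Ext D A 1)) : Nonempty (B ≅ A ⊞ D) := by
  obtain ⟨x, hx⟩ := Ext.covariant_sequence_exact₃ D h.choose_spec (Ext.mk₀ (𝟙 D)) (n₁ := 1) rfl
    (Subsingleton.elim _ _)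
  obtain ⟨s, rfl⟩ := (Ext.mk₀_bijective _ _).2 x
  exact h.nonempty_iso_biprod_of_section s ((Ext.mk₀_bijective _ _).1 (by simpa using hx))

lemma extClosed_rightPerp (X : C → Prop) : ExtClosed (rightPerp X) := by
  refine fun A B D f g h hA hD M hM i hi => subsingleton_of_forall_eq 0 fun x => ?_
  have := hA M hM i hi
  have := hD M hM i hi
  obtain ⟨y, rfl⟩ :=
    Ext.covariant_sequence_exact₂ M h.choose_spec x (Subsingleton.elim _ _)
  rw [Subsingleton.elim y 0, Ext.zero_comp]

lemma cokerMonoClosed_rightPerp (X : C → Prop) : CokerMonoClosed (rightPerp X) := by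
  refine fun A B D f g h hA hB M hM i hi => subsingleton_of_forall_eq 0 fun x => ?_
  have := hA M hM (i + 1) (by lia)
  have := hB M hM i hi
  obtain ⟨y, rfl⟩ :=
    Ext.covariant_sequence_exact₃ M h.choose_spec x (n₁ := i + 1) rfl (Subsingleton.elim _ _)
  rw [Subsingleton.elim y 0, Ext.zero_comp]

lemma rightPerp_of_retract {X : C → Prop} {A N : C} (i : A ⟶ N) (p : N ⟶ A) (hip : i ≫ p = 𝟙 A)
    (hN : rightPerp X N) : rightPerp X A := by
  refine fun M hM n hn => subsingleton_of_forall_eq 0 fun x => ?_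
  have := hN M hM n hn
  calc
    x = (x.comp (Ext.mk₀ i) (add_zero n)).comp (Ext.mk₀ p) (add_zero n) := by
      rw [Ext.comp_assoc_of_third_deg_zero, Ext.mk₀_comp_mk₀, hip, Ext.comp_mk₀_id]
    _ = 0 := by rw [Subsingleton.elim (x.comp (Ext.mk₀ i) (add_zero n)) 0, Ext.zero_comp]

lemma IsCogenerator.mem_of_rightPerp {X W : C → Prop} (hW : IsCogenerator W X) (hsub : IsSubcat W)
    {U : C} (hU : X U) (hperp : rightPerp X U) : W U := by
  obtain ⟨W₀, U', f, g, hfg, hW₀, hU'⟩ := hW.2 U hU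
  obtain ⟨e⟩ := hfg.nonempty_iso_biprod_of_subsingleton_ext (hperp U' hU' 1 le_rfl)
  exact hsub.of_biprod_left (hsub.iso_closed e hW₀)

end Orthogonal

namespace LeftFrobenius

variable {X W : C → Prop}

lemma rightPerp_of_hatAll (hF : LeftFrobenius X W) {N : C} (hN : HatAll W N) : rightPerp X N :=
  hN.mem_of_cokerMonoClosed (cokerMonoClosed_rightPerp X) hF.perp

lemma hatExtStable (hF : LeftFrobenius X W) : HatExtStable X := by
  intro n A B D f g hfg hA hD
  obtain ⟨V, U, j, q, hjq, hU, hV⟩ := hF.cogen.exists_embedding_of_hat hF.extClosed hA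
  obtain ⟨P, a, b, c, d, hab, hcd⟩ := hfg.exists_pushout hjq
  obtain ⟨e⟩ := hab.nonempty_iso_biprod_of_subsingleton_ext
    (hF.rightPerp_of_hatAll ⟨n, hV⟩ D hD 1 le_rfl)
  have hVD : Hat X n (V ⊞ D) := (hV.mono hF.cogen.1).biprod hF.subX (.of_mem hF.subX.zero n hD)
  exact hF.kerEpiClosed.hat_kernel hcd (hVD.of_iso hF.subX e.symm) hU

lemma isThickSub_hatAll (hF : LeftFrobenius X W) : IsThickSub (HatAll X) :=
  hF.hatExtStable.isThickSub_hatAll hF.subX hF.kerEpiClosed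

theorem hatAll_iff_hatAll_and_rightPerp (hF : LeftFrobenius X W) (M : C) :
    HatAll W M ↔ HatAll X M ∧ rightPerp X M := by
  refine ⟨fun ⟨n, hM⟩ => ⟨⟨n, hM.mono hF.cogen.1⟩, hF.rightPerp_of_hatAll ⟨n, hM⟩⟩, ?_⟩
  rintro ⟨hM, hperp⟩
  obtain ⟨V, U, f, g, hfg, hU, hV⟩ := hF.cogen.exists_cover_of_hatAll hF.extClosed hF.subX.zero hM
  have hUperp : rightPerp X U :=
    extClosed_rightPerp X f g hfg (hF.rightPerp_of_hatAll hV) hperp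
  exact .of_ses hfg hV (hF.cogen.mem_of_rightPerp hF.subW hU hUperp)

theorem cotorsionPairOn (hF : LeftFrobenius X W) : CotorsionPairOn (HatAll X) X (HatAll W) where
  subU _ hM := ⟨0, hM⟩
  subV M hM := ((hF.hatAll_iff_hatAll_and_rightPerp M).1 hM).1
  isoU := hF.subX.iso_closed
  summandU := hF.subX.summand_closed
  isoV := fun e ⟨n, hM⟩ => ⟨n, hM.of_iso hF.subW e⟩
  summandV {A M} i p hip hM := by
    obtain ⟨hMX, hMperp⟩ := (hF.hatAll_iff_hatAll_and_rightPerp M).1 hM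
    exact (hF.hatAll_iff_hatAll_and_rightPerp A).2
      ⟨hF.isThickSub_hatAll.1.summand_closed i p hip hMX, rightPerp_of_retract i p hip hMperp⟩
  ext1 M _ hM hN := hF.rightPerp_of_hatAll hN M hM 1 le_rfl
  res _ hM := hF.cogen.exists_cover_of_hatAll hF.extClosed hF.subX.zero hM
  cores := fun _ ⟨n, hM⟩ =>
    have ⟨V, U, f, g, hfg, hU, hV⟩ := hF.cogen.exists_embedding_of_hat hF.extClosed hM
    ⟨V, U, f, g, hfg, hU, n, hV⟩

end LeftFrobenius

theorem statement7_general {C : Type u} [Category.{v} C] [Abelian C] [HasExt.{w} C]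
    (X W : C → Prop) (hF : LeftFrobenius X W) :
    CotorsionPairOn (HatAll X) X (HatAll W) ∧ (∀ M, thickClosure X M ↔ HatAll X M) :=
  ⟨hF.cotorsionPairOn, thickClosure_iff_hatAll hF.isThickSub_hatAll⟩

/-- For a left Frobenius pair `(X, W)`, `(X, Ŵ)` is a cotorsion pair on the
extension-closed subcategory `Thick(X) = X̂` of `C`. -/
theorem statement7 {C : Type u} [Category.{v} C] [Abelian C]
    [EnoughProjectives C] [EnoughInjectives C] [HasExt.{w} C]
    (X W : C → Prop) (hF : LeftFrobenius X W) :
    CotorsionPairOn (HatAll X) X (HatAll W) ∧ (∀ M, thickClosure X M ↔ HatAll X M) :=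
  statement7_general X W hF

end FrobeniusPaper
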